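/- Let P be an n×m matrix with nonnegative real entries summing to 1, let λ_1,…,λ_r be positive reals, and suppose P admits a diagonal form of PSD factorization with respect to Λ = diag(√λ_1,…,√λ_r), i.e., there exist r×r positive semidefinite complex matrices C_1,…,C_n and D_1,…,D_m with tr(C_x D_y) = P(x,y) for all x,y and ∑_{x=1}^n C_x = ∑_{y=1}^m D_y = Λ. Then the mutual information of P satisfies I(P) ≤ −∑_{i=1}^r λ_i·log(λ_i), where I(P) = ∑_{x,y : P(x,y)>0} P(x,y)·log( P(x,y) / ( (∑_j P(x,j))·(∑_i P(i,y)) ) ). -/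

import Mathlib

open Matrix
open scoped ComplexOrder

/-!
Put `K = √Λ`. Conjugation by `K` turns the factorization into `P x y = tr (T x * E y)`, where the
`T x = K * C x * K` are positive semidefinite with sum `ρ = Λ²` and the `E y = K⁻¹ * D y * K⁻¹` form
a POVM. This is a measurement of an ensemble with average state `ρ`, so Holevo's bound applies.

The part of Holevo's bound needed here has an elementary proof. With `p = tr (T * E y)` and
`b = tr (ρ * E y)`, for every `t > 0` and every positive semidefinite `T`,
`∑ y, p² / (t * p + tr T * b) ≤ tr (T * (t + ρ)⁻¹)`. It follows by completing the square against the
observable `∑ y, c y • E y` and then choosing the best real weights `c`. Summing over `T = T x`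
compares `∑ P / (t + q)`, where `q` is the ratio of the product of the marginals to `P`, with
`∑ l / (t + l)` over the eigenvalues `l` of `ρ`. Integrating this comparison over `t` turns both
sides into logarithms.
-/

section LogSums

variable {α : Type*} [Fintype α] {w s : α → ℝ}

lemma hasDerivAt_sum_mul_log_add {t : ℝ} (h : ∀ i, w i ≠ 0 → t + s i ≠ 0) :
    HasDerivAt (fun u ↦ ∑ i, w i * Real.log (u + s i)) (∑ i, w i / (t + s i)) t := by
  refine HasDerivAt.fun_sum fun i _ ↦ ?_
  by_cases hi : w i = 0
  · simpa [hi] using hasDerivAt_const t (0 : ℝ)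
  · simpa [div_eq_mul_inv] using
      (((hasDerivAt_id t).add_const (s i)).log (h i hi)).const_mul (w i)

lemma tendsto_sum_mul_log_add_atTop (hw : ∑ i, w i = 0) :
    Filter.Tendsto (fun t ↦ ∑ i, w i * Real.log (t + s i)) Filter.atTop (nhds 0) := by
  have hlog (i : α) :
      Filter.Tendsto (fun t ↦ w i * (Real.log (t + s i) - Real.log t)) Filter.atTop (nhds 0) := by
    simpa using (Real.tendsto_log_comp_add_sub_log (s i)).const_mul (w i)
  have hsum := tendsto_finsetSum Finset.univ fun i _ ↦ hlog i
  simpa [mul_sub, ← Finset.sum_mul, hw] using hsum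

/-- This is the representation `log s = ∫₀^∞ (1 / (1 + t) - 1 / (t + s)) dt` in disguise. -/
lemma sum_mul_log_nonpos_of_sum_div_add_nonneg (hs : ∀ i, w i ≠ 0 → 0 < s i)
    (hw : ∑ i, w i = 0) (h : ∀ t, 0 < t → 0 ≤ ∑ i, w i / (t + s i)) :
    ∑ i, w i * Real.log (s i) ≤ 0 := by
  have hderiv (t : ℝ) (ht : 0 ≤ t) := hasDerivAt_sum_mul_log_add (w := w) (s := s)
    fun i hi ↦ (add_pos_of_nonneg_of_pos ht (hs i hi)).ne'
  have hmono : MonotoneOn (fun t ↦ ∑ i, w i * Real.log (t + s i)) (Set.Ici 0) := by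
    refine monotoneOn_of_hasDerivWithinAt_nonneg (convex_Ici 0)
      (fun t ht ↦ (hderiv t ht).continuousAt.continuousWithinAt)
      (fun t ht ↦ (hderiv t (interior_subset ht)).hasDerivWithinAt) fun t ht ↦ h t ?_
    simpa using ht
  refine ge_of_tendsto (tendsto_sum_mul_log_add_atTop (s := s) hw) ?_
  filter_upwards [Filter.eventually_ge_atTop 0] with t ht
  simpa using hmono Set.self_mem_Ici ht ht

lemma sum_mul_log_le_of_sum_div_add_le {β : Type*} [Fintype β] {w' s' : β → ℝ}
    (hs : ∀ i, w i ≠ 0 → 0 < s i) (hs' : ∀ j, w' j ≠ 0 → 0 < s' j) (hw : ∑ i, w i = ∑ j, w' j)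
    (h : ∀ t, 0 < t → ∑ j, w' j / (t + s' j) ≤ ∑ i, w i / (t + s i)) :
    ∑ i, w i * Real.log (s i) ≤ ∑ j, w' j * Real.log (s' j) := by
  have hsum := sum_mul_log_nonpos_of_sum_div_add_nonneg (w := Sum.elim w (-w'))
    (s := Sum.elim s s') (by simpa [Sum.forall] using ⟨hs, hs'⟩) (by simp [hw])
    fun t ht ↦ by simpa [neg_div] using h t ht
  simpa using hsum

end LogSums

section MutualInformation

variable {α β : Type*} [Fintype α] [Fintype β] {P : Matrix α β ℝ}

/-- The mutual information, in nats, between the two marginals of the joint distribution `P`.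
Since `0 * Real.log 0 = 0`, the sum need not be restricted to the support of `P`. -/
noncomputable def mutualInformation (P : Matrix α β ℝ) : ℝ :=
  ∑ x, ∑ y, P x y * Real.log (P x y / ((∑ j, P x j) * ∑ i, P i y))

lemma mutualInformation_eq_sum_ite (hP : ∀ x y, 0 ≤ P x y) :
    mutualInformation P = ∑ x, ∑ y, if 0 < P x y then
      P x y * Real.log (P x y / ((∑ j, P x j) * ∑ i, P i y)) else 0 := by
  refine Finset.sum_congr rfl fun x _ ↦ Finset.sum_congr rfl fun y _ ↦ ?_
  split_ifs with h
  · rfl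
  · rw [le_antisymm (not_lt.mp h) (hP x y), zero_mul]

lemma mutualInformation_le_of_sum_sq_div_le {ι : Type*} [Fintype ι] {l : ι → ℝ}
    (hP : ∀ x y, 0 ≤ P x y) (hl : ∀ i, 0 ≤ l i) (hsum : ∑ i, l i = ∑ x, ∑ y, P x y)
    (h : ∀ t, 0 < t → ∑ x, ∑ y, P x y ^ 2 / (t * P x y + (∑ j, P x j) * ∑ i, P i y) ≤
      ∑ i, l i / (t + l i)) :
    mutualInformation P ≤ ∑ i, Real.negMulLog (l i) := by
  set q : α × β → ℝ := fun z ↦ ((∑ j, P z.1 j) * ∑ i, P i z.2) / P z.1 z.2 with hq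
  have hqpos (z : α × β) (hz : P z.1 z.2 ≠ 0) : 0 < q z := by
    have hpos : 0 < P z.1 z.2 := (hP z.1 z.2).lt_of_ne' hz
    refine div_pos (mul_pos ?_ ?_) hpos
    · exact Finset.sum_pos' (fun j _ ↦ hP z.1 j) ⟨z.2, Finset.mem_univ _, hpos⟩
    · exact Finset.sum_pos' (fun i _ ↦ hP i z.2) ⟨z.1, Finset.mem_univ _, hpos⟩
  have hdiv (t : ℝ) (z : α × β) : P z.1 z.2 / (t + q z) =
      P z.1 z.2 ^ 2 / (t * P z.1 z.2 + (∑ j, P z.1 j) * ∑ i, P i z.2) := by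
    rcases eq_or_ne (P z.1 z.2) 0 with hz | hz
    · simp [hz]
    · rw [sq, ← mul_div_mul_left (P z.1 z.2) (t + q z) hz, mul_add, hq, mul_div_cancel₀ _ hz,
        mul_comm t]
  have hlog := sum_mul_log_le_of_sum_div_add_le (w := l) (s := l) (w' := fun z ↦ P z.1 z.2)
    (s' := q) (fun i hi ↦ (hl i).lt_of_ne' hi) hqpos (by rw [hsum, Fintype.sum_prod_type])
    fun t ht ↦ by simpa only [hdiv, Fintype.sum_prod_type] using h t ht
  have hflip (z : α × β) : Real.log (P z.1 z.2 / ((∑ j, P z.1 j) * ∑ i, P i z.2)) =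
      -Real.log (q z) := by rw [hq, ← Real.log_inv, inv_div]
  calc mutualInformation P
      = -∑ z : α × β, P z.1 z.2 * Real.log (q z) := by
        rw [mutualInformation, ← Fintype.sum_prod_type']
        simp only [hflip, mul_neg, Finset.sum_neg_distrib]
    _ ≤ -∑ i, l i * Real.log (l i) := neg_le_neg hlog
    _ = ∑ i, Real.negMulLog (l i) := by simp [Real.negMulLog]

end MutualInformation

section Trace

open scoped MatrixOrder

variable {ι 𝕜 : Type*} [RCLike 𝕜] [Fintype ι] {A B : Matrix ι ι 𝕜}

lemma re_trace_mul_nonneg (hA : A.PosSemidef) (hB : B.PosSemidef) :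
    0 ≤ RCLike.re (A * B).trace := by
  classical
  obtain ⟨S, rfl⟩ := CStarAlgebra.nonneg_iff_eq_star_mul_self.mp hA.nonneg
  rw [mul_assoc, trace_mul_comm]
  exact (RCLike.nonneg_iff.mp (hB.mul_mul_conjTranspose_same S).trace_nonneg).1

lemma le_re_trace_smul_one [DecidableEq ι] (hA : A.PosSemidef) :
    A ≤ RCLike.re A.trace • (1 : Matrix ι ι 𝕜) := by
  rw [← Algebra.algebraMap_eq_smul_one]
  refine le_algebraMap_of_spectrum_le (fun x hx ↦ ?_) hA.isHermitian
  rw [hA.isHermitian.spectrum_real_eq_range_eigenvalues] at hx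
  obtain ⟨i, rfl⟩ := hx
  rw [hA.isHermitian.trace_eq_sum_eigenvalues, ← RCLike.ofReal_sum, RCLike.ofReal_re]
  exact Finset.single_le_sum (fun j _ ↦ hA.eigenvalues_nonneg j) (Finset.mem_univ i)

lemma re_trace_mul_le (hA : A.PosSemidef) (hB : B.PosSemidef) :
    RCLike.re (A * B).trace ≤ RCLike.re A.trace * RCLike.re B.trace := by
  classical
  have h := re_trace_mul_nonneg (le_iff.mp (le_re_trace_smul_one hA)) hB
  simpa [sub_mul, RCLike.smul_re] using h

lemma re_trace_mul_sum_smul {κ : Type*} [Fintype κ] (c : κ → ℝ) (A : Matrix ι ι 𝕜)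
    (E : κ → Matrix ι ι 𝕜) :
    RCLike.re (A * ∑ y, c y • E y).trace = ∑ y, c y * RCLike.re (A * E y).trace := by
  simp [Finset.mul_sum, trace_sum, RCLike.smul_re]

end Trace

section Resolvent

open scoped MatrixOrder

variable {ι 𝕜 : Type*} [RCLike 𝕜] [Fintype ι] [DecidableEq ι] {A M R X : Matrix ι ι 𝕜}

/-- Completing the square: the matrix is `(M⁻¹ - X) * M * (M⁻¹ - X)`. -/
lemma posSemidef_inv_sub_two_smul_add (hM : M.PosDef) (hX : X.IsHermitian) :
    (M⁻¹ - (2 : ℝ) • X + X * M * X).PosSemidef := by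
  have hdet : IsUnit M.det := (isUnit_iff_isUnit_det M).mp hM.isUnit
  have hsq : (M⁻¹ - X) * M * (M⁻¹ - X)ᴴ = M⁻¹ - (2 : ℝ) • X + X * M * X := by
    rw [conjTranspose_sub, hM.isHermitian.inv.eq, hX.eq, sub_mul, nonsing_inv_mul M hdet, mul_sub,
      sub_mul, sub_mul, one_mul, one_mul, mul_assoc X M M⁻¹, mul_nonsing_inv M hdet, mul_one,
      two_smul]
    abel
  exact hsq ▸ hM.posSemidef.mul_mul_conjTranspose_same (M⁻¹ - X)

lemma re_trace_cfc (hA : A.IsHermitian) (f : ℝ → ℝ) :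
    RCLike.re (cfc f A).trace = ∑ i, f (hA.eigenvalues i) := by
  rw [hA.cfc_eq, IsHermitian.cfc, Unitary.conjStarAlgAut_apply, trace_mul_cycle,
    Unitary.coe_star_mul_self, one_mul]
  simp [trace]

lemma re_trace_cfc_diagonal (f : ℝ → ℝ) (d : ι → ℝ) :
    RCLike.re (cfc f (diagonal fun i ↦ (d i : 𝕜) : Matrix ι ι 𝕜)).trace = ∑ i, f (d i) := by
  have hd : (diagonal fun i ↦ (d i : 𝕜) : Matrix ι ι 𝕜).IsHermitian :=
    isHermitian_diagonal_of_self_adjoint _ (by ext; simp)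
  have hroots : Finset.univ.val.map (fun i ↦ (d i : 𝕜)) =
      Finset.univ.val.map (RCLike.ofReal ∘ hd.eigenvalues) := by
    rw [← hd.roots_charpoly_eq_eigenvalues, charpoly_diagonal,
      ← Polynomial.roots_multiset_prod_X_sub_C (Finset.univ.val.map fun i ↦ (d i : 𝕜)),
      Multiset.map_map]
    rfl
  have hsum := congrArg (fun S ↦ (S.map fun z ↦ f (RCLike.re z)).sum) hroots
  rw [re_trace_cfc hd]
  simpa using hsum.symm

lemma mul_inv_smul_one_add_eq_cfc (hR : R.PosSemidef) {t : ℝ} (ht : 0 < t) :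
    R * (t • 1 + R)⁻¹ = cfc (fun x ↦ x / (t + x)) R := by
  have hM : (t • 1 + R).PosDef := (PosDef.one.smul ht).add_posSemidef hR
  have hcont (f : ℝ → ℝ) : ContinuousOn f (spectrum ℝ R) := R.finite_real_spectrum.continuousOn f
  have hsa : IsSelfAdjoint R := hR.isHermitian
  have hmul : cfc (fun x ↦ x / (t + x)) R * (t • 1 + R) = R := by
    calc cfc (fun x ↦ x / (t + x)) R * (t • 1 + R)
        = cfc (fun x ↦ x / (t + x)) R * cfc (fun x ↦ t + x) R := by
          rw [cfc_const_add t (fun x ↦ x) R, cfc_id' ℝ R, Algebra.algebraMap_eq_smul_one]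
      _ = cfc (fun x ↦ x / (t + x) * (t + x)) R := (cfc_mul _ _ R (hcont _) (hcont _)).symm
      _ = cfc (fun x ↦ x) R := cfc_congr fun x hx ↦ by
          have hx0 : 0 ≤ x := spectrum_nonneg_of_nonneg hR.nonneg hx
          exact div_mul_cancel₀ x (by positivity)
      _ = R := cfc_id' ℝ R
  rw [← mul_nonsing_inv_cancel_right _ (cfc _ R) ((isUnit_iff_isUnit_det _).mp hM.isUnit), hmul]

lemma re_trace_mul_inv_smul_one_add (hR : R.PosSemidef) {t : ℝ} (ht : 0 < t) :
    RCLike.re (R * (t • 1 + R)⁻¹).trace =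
      ∑ i, hR.isHermitian.eigenvalues i / (t + hR.isHermitian.eigenvalues i) := by
  rw [mul_inv_smul_one_add_eq_cfc hR ht, re_trace_cfc hR.isHermitian]

/-- The von Neumann entropy `-tr (ρ log ρ)`, in nats, with `ρ log ρ` given by the continuous
functional calculus; `ρ` need not have trace one. -/
noncomputable def vonNeumannEntropy (ρ : Matrix ι ι 𝕜) : ℝ :=
  RCLike.re (cfc Real.negMulLog ρ).trace

lemma vonNeumannEntropy_diagonal (d : ι → ℝ) :
    vonNeumannEntropy (diagonal fun i ↦ (d i : 𝕜)) = -∑ i, d i * Real.log (d i) := by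
  simp [vonNeumannEntropy, re_trace_cfc_diagonal, Real.negMulLog]

end Resolvent

section Measurement

open scoped MatrixOrder

variable {ι κ 𝕜 : Type*} [RCLike 𝕜] [DecidableEq ι] [Fintype κ]

/-- A positive operator-valued measure with outcomes in `κ`, describing a quantum measurement. -/
structure IsPOVM (E : κ → Matrix ι ι 𝕜) : Prop where
  posSemidef : ∀ y, (E y).PosSemidef
  sum_eq_one : ∑ y, E y = 1

namespace IsPOVM

variable {E : κ → Matrix ι ι 𝕜} (c : κ → ℝ)

lemma isHermitian_sum_smul (hE : IsPOVM E) : (∑ y, c y • E y).IsHermitian := by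
  simp only [IsHermitian, conjTranspose_sum, conjTranspose_smul, (hE.posSemidef _).1.eq,
    star_trivial]

variable [Fintype ι] {A R T : Matrix ι ι 𝕜}

/-- Kadison's inequality for the unital positive map `c ↦ ∑ y, c y • E y`. -/
lemma sum_smul_mul_self_le (hE : IsPOVM E) :
    (∑ y, c y • E y) * (∑ y, c y • E y) ≤ ∑ y, c y ^ 2 • E y := by
  set X := ∑ y, c y • E y with hX
  have hXh : X.IsHermitian := hE.isHermitian_sum_smul c
  have hterm (y : κ) : (c y • 1 - X) * E y * (c y • 1 - X)ᴴ
      = c y ^ 2 • E y - (c y • E y) * X - X * (c y • E y) + X * E y * X := by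
    simp only [conjTranspose_sub, conjTranspose_smul, conjTranspose_one, hXh.eq, star_trivial,
      sub_mul, mul_sub, smul_mul_assoc, mul_smul_comm, one_mul, mul_one, smul_smul, sq, smul_sub]
    abel
  have hsum : ∑ y, (c y • 1 - X) * E y * (c y • 1 - X)ᴴ = ∑ y, c y ^ 2 • E y - X * X := by
    simp only [hterm, Finset.sum_add_distrib, Finset.sum_sub_distrib, ← Finset.sum_mul,
      ← Finset.mul_sum, hE.sum_eq_one, mul_one, ← hX]
    abel
  rw [le_iff, ← hsum]
  exact posSemidef_sum _ fun y _ ↦ (hE.posSemidef y).mul_mul_conjTranspose_same _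

lemma re_trace_mul_mul_self_le (hE : IsPOVM E) (hA : A.PosSemidef) :
    RCLike.re (A * ((∑ y, c y • E y) * (∑ y, c y • E y))).trace ≤
      ∑ y, c y ^ 2 * RCLike.re (A * E y).trace := by
  have h := re_trace_mul_nonneg hA (le_iff.mp (hE.sum_smul_mul_self_le c))
  rw [mul_sub, trace_sub, map_sub, re_trace_mul_sum_smul] at h
  exact sub_nonneg.mp h

lemma two_mul_sum_mul_re_trace_le (hE : IsPOVM E) (hT : T.PosSemidef) (hR : R.PosSemidef) {t : ℝ}
    (ht : 0 < t) :
    2 * ∑ y, c y * RCLike.re (T * E y).trace ≤ RCLike.re (T * (t • 1 + R)⁻¹).trace +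
      ∑ y, c y ^ 2 * (t * RCLike.re (T * E y).trace +
        RCLike.re T.trace * RCLike.re (R * E y).trace) := by
  set X := ∑ y, c y • E y with hX
  have hXh : X.IsHermitian := hE.isHermitian_sum_smul c
  have hM : (t • 1 + R).PosDef := (PosDef.one.smul ht).add_posSemidef hR
  have hsquare : 2 * RCLike.re (T * X).trace ≤ RCLike.re (T * (t • 1 + R)⁻¹).trace +
      (t * RCLike.re (T * (X * X)).trace + RCLike.re (T * (X * R * X)).trace) := by
    have h := re_trace_mul_nonneg hT (posSemidef_inv_sub_two_smul_add hM hXh)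
    simp only [mul_add, add_mul, mul_sub, mul_smul_comm, smul_mul_assoc, mul_one, trace_add,
      trace_sub, trace_smul, map_add, map_sub, RCLike.smul_re] at h
    linarith
  have hXRX : RCLike.re (T * (X * R * X)).trace ≤
      RCLike.re T.trace * RCLike.re (R * (X * X)).trace := by
    have hpos : (X * R * X).PosSemidef := by
      simpa only [hXh.eq] using hR.mul_mul_conjTranspose_same X
    have hcycle : (X * R * X).trace = (R * (X * X)).trace := by
      rw [mul_assoc, trace_mul_comm, mul_assoc]
    exact hcycle ▸ re_trace_mul_le hT hpos
  have hT0 : 0 ≤ RCLike.re T.trace := (RCLike.nonneg_iff.mp hT.trace_nonneg).1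
  calc 2 * ∑ y, c y * RCLike.re (T * E y).trace
      = 2 * RCLike.re (T * X).trace := by rw [hX, re_trace_mul_sum_smul]
    _ ≤ RCLike.re (T * (t • 1 + R)⁻¹).trace + (t * RCLike.re (T * (X * X)).trace +
          RCLike.re T.trace * RCLike.re (R * (X * X)).trace) := by linarith
    _ ≤ RCLike.re (T * (t • 1 + R)⁻¹).trace + (t * ∑ y, c y ^ 2 * RCLike.re (T * E y).trace +
          RCLike.re T.trace * ∑ y, c y ^ 2 * RCLike.re (R * E y).trace) := by
        gcongr
        exacts [hE.re_trace_mul_mul_self_le c hT, hE.re_trace_mul_mul_self_le c hR]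
    _ = _ := by
        simp only [Finset.mul_sum, ← Finset.sum_add_distrib]
        congr! 2
        ring

lemma sum_sq_div_le (hE : IsPOVM E) (hT : T.PosSemidef) (hR : R.PosSemidef) {t : ℝ} (ht : 0 < t) :
    ∑ y, RCLike.re (T * E y).trace ^ 2 / (t * RCLike.re (T * E y).trace +
      RCLike.re T.trace * RCLike.re (R * E y).trace) ≤ RCLike.re (T * (t • 1 + R)⁻¹).trace := by
  set p : κ → ℝ := fun y ↦ RCLike.re (T * E y).trace
  set d : κ → ℝ := fun y ↦ t * p y + RCLike.re T.trace * RCLike.re (R * E y).trace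
  have h := hE.two_mul_sum_mul_re_trace_le (fun y ↦ p y / d y) hT hR ht
  change 2 * ∑ y, p y / d y * p y ≤ _ + ∑ y, (p y / d y) ^ 2 * d y at h
  have hlin (y : κ) : p y / d y * p y = p y ^ 2 / d y := by ring
  have hquad (y : κ) : (p y / d y) ^ 2 * d y = p y ^ 2 / d y := by
    by_cases hy : d y = 0
    · simp [hy]
    · field_simp
  simp only [hlin, hquad] at h
  change ∑ y, p y ^ 2 / d y ≤ _
  linarith

end IsPOVM

variable {α : Type*} [Fintype α] [Fintype ι]

/-- Holevo's bound without its term for the average entropy of the states `T x / tr (T x)`. -/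
theorem mutualInformation_le_vonNeumannEntropy {P : Matrix α κ ℝ} {T : α → Matrix ι ι 𝕜}
    {E : κ → Matrix ι ι 𝕜} (hT : ∀ x, (T x).PosSemidef) (hE : IsPOVM E)
    (hP : ∀ x y, RCLike.re (T x * E y).trace = P x y) :
    mutualInformation P ≤ vonNeumannEntropy (∑ x, T x) := by
  have hρ : (∑ x, T x).PosSemidef := posSemidef_sum _ fun x _ ↦ hT x
  have hrow (x : α) : ∑ y, P x y = RCLike.re (T x).trace := by
    simp only [← hP, ← map_sum, ← trace_sum, ← Finset.mul_sum, hE.sum_eq_one, mul_one]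
  have hcol (y : κ) : ∑ x, P x y = RCLike.re ((∑ x, T x) * E y).trace := by
    simp only [← hP, ← map_sum, ← trace_sum, ← Finset.sum_mul]
  rw [vonNeumannEntropy, re_trace_cfc hρ.isHermitian]
  refine mutualInformation_le_of_sum_sq_div_le
    (fun x y ↦ hP x y ▸ re_trace_mul_nonneg (hT x) (hE.posSemidef y)) hρ.eigenvalues_nonneg ?_
    fun t ht ↦ ?_
  · simp only [hrow]
    rw [← map_sum, ← trace_sum, hρ.isHermitian.trace_eq_sum_eigenvalues, ← RCLike.ofReal_sum,
      RCLike.ofReal_re]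
  · rw [← re_trace_mul_inv_smul_one_add hρ ht, Finset.sum_mul, trace_sum, map_sum]
    simp only [hrow, hcol]
    refine Finset.sum_le_sum fun x _ ↦ ?_
    simpa only [hP] using hE.sum_sq_div_le (hT x) hρ ht

theorem mutual_information_le_entropy_of_schmidt_coefficients_general {P : Matrix α κ ℝ}
    {C : α → Matrix ι ι 𝕜} {D : κ → Matrix ι ι 𝕜} {Λ : Matrix ι ι 𝕜} (hΛ : Λ.PosDef)
    (hC : ∀ x, (C x).PosSemidef) (hD : ∀ y, (D y).PosSemidef)
    (htr : ∀ x y, (C x * D y).trace = (P x y : 𝕜)) (hCsum : ∑ x, C x = Λ) (hDsum : ∑ y, D y = Λ) :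
    mutualInformation P ≤ vonNeumannEntropy (Λ * Λ) := by
  set K := CFC.sqrt Λ
  have hKK : K * K = Λ := CFC.sqrt_mul_sqrt_self Λ hΛ.posSemidef.nonneg
  have hKh : K.IsHermitian := (CFC.sqrt_nonneg Λ).posSemidef.isHermitian
  have hKdet : IsUnit K.det :=
    isUnit_of_mul_isUnit_left (by rw [← det_mul, hKK]; exact (isUnit_iff_isUnit_det Λ).mp hΛ.isUnit)
  have hE : IsPOVM fun y ↦ K⁻¹ * D y * K⁻¹ :=
    { posSemidef := fun y ↦ by
        simpa only [hKh.inv.eq] using (hD y).mul_mul_conjTranspose_same K⁻¹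
      sum_eq_one := by
        rw [← Finset.sum_mul, ← Finset.mul_sum, hDsum, ← hKK, ← mul_assoc,
          nonsing_inv_mul K hKdet, one_mul, mul_nonsing_inv K hKdet] }
  have hT (x : α) : (K * C x * K).PosSemidef := by
    simpa only [hKh.eq] using (hC x).mul_mul_conjTranspose_same K
  have hTsum : ∑ x, K * C x * K = Λ * Λ := by
    rw [← Finset.sum_mul, ← Finset.mul_sum, hCsum, ← hKK]
    simp only [mul_assoc]
  have hP (x : α) (y : κ) : RCLike.re (K * C x * K * (K⁻¹ * D y * K⁻¹)).trace = P x y := by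
    have hconj : K * C x * K * (K⁻¹ * D y * K⁻¹) = K * (C x * D y) * K⁻¹ := by
      simp only [mul_assoc, mul_nonsing_inv_cancel_left K _ hKdet]
    rw [hconj, trace_mul_cycle, nonsing_inv_mul K hKdet, one_mul, htr, RCLike.ofReal_re]
  exact hTsum ▸ mutualInformation_le_vonNeumannEntropy hT hE hP

end Measurement

/-- If `P` (a probability matrix) admits a diagonal form of PSD factorization
with respect to `Λ = diagonal (√λ₁, …, √λᵣ)`, then the mutual information of `P` is at most
the entropy `−∑ᵢ λᵢ log λᵢ`. -/
theorem mutual_information_le_entropy_of_schmidt_coefficients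
    (n m r : ℕ) (P : Matrix (Fin n) (Fin m) ℝ)
    (hP : ∀ x y, 0 ≤ P x y) (hPsum : ∑ x, ∑ y, P x y = 1)
    (l : Fin r → ℝ) (hl : ∀ i, 0 < l i)
    (C : Fin n → Matrix (Fin r) (Fin r) ℂ) (D : Fin m → Matrix (Fin r) (Fin r) ℂ)
    (hC : ∀ x, (C x).PosSemidef) (hD : ∀ y, (D y).PosSemidef)
    (htr : ∀ x y, (C x * D y).trace = (P x y : ℂ))
    (hCsum : (∑ x, C x) = Matrix.diagonal (fun i => (Real.sqrt (l i) : ℂ)))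
    (hDsum : (∑ y, D y) = Matrix.diagonal (fun i => (Real.sqrt (l i) : ℂ))) :
    (∑ x, ∑ y, if 0 < P x y then
        P x y * Real.log (P x y / ((∑ j, P x j) * (∑ i, P i y))) else 0)
      ≤ -∑ i, l i * Real.log (l i) := by
  have hΛ : (diagonal fun i ↦ (Real.sqrt (l i) : ℂ)).PosDef :=
    PosDef.diagonal fun i ↦ by simpa using hl i
  have hsq : (diagonal fun i ↦ (Real.sqrt (l i) : ℂ)) * diagonal (fun i ↦ (Real.sqrt (l i) : ℂ)) =
      diagonal fun i ↦ (l i : ℂ) := by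
    simp only [diagonal_mul_diagonal, ← Complex.ofReal_mul, Real.mul_self_sqrt (hl _).le]
  rw [← mutualInformation_eq_sum_ite hP, ← vonNeumannEntropy_diagonal (𝕜 := ℂ) l]
  exact hsq ▸ mutual_information_le_entropy_of_schmidt_coefficients_general hΛ hC hD htr hCsum hDsum
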